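/- Let (X_i)_{i∈ℤ} be a stationary ergodic process over a finite alphabet 𝕏 with entropy rate h. For any ε > 0 and any sequence of sample sizes n(k) ≥ 2^{k(h+ε)}, the expected plug-in estimate of the entropy rate converges to the entropy rate: lim_{k→∞} E[H(k, X_1^{n(k)})]/k = h. -/

import Mathlib

open MeasureTheory Filter Real

variable {𝕏 : Type*} [Fintype 𝕏] [Nonempty 𝕏] [DecidableEq 𝕏]
  [MeasurableSpace 𝕏] [MeasurableSingletonClass 𝕏]

/-- The left shift on two-sided sequences: `(shift ω) i = ω (i + 1)`. -/
def shift (ω : ℤ → 𝕏) : ℤ → 𝕏 := fun i => ω (i + 1)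

/-- The block `X_{s+1}^{s+l}` of a sequence `ω`, as a tuple in `𝕏^l`. -/
def blk (s l : ℕ) (ω : ℤ → 𝕏) : Fin l → 𝕏 := fun i => ω ((s : ℤ) + 1 + (i : ℤ))

/-- Shannon entropy (base 2) of a distribution `p` on a finite set:
`H(p) = -∑_{w : p w > 0} p w * log₂ (p w)` (`logb 2 0 = 0`, so zero-mass
points contribute nothing). -/
noncomputable def Hent {A : Type*} [Fintype A] (p : A → ℝ) : ℝ :=
  -∑ w, p w * Real.logb 2 (p w)

/-- Empirical nonoverlapping-block distribution
`p_k(w, x_1^n) = ⌊n/k⌋⁻¹ ∑_{i=1}^{⌊n/k⌋} 1[x_{(i-1)k+1}^{ik} = w]`. -/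
noncomputable def empDist (k n : ℕ) (ω : ℤ → 𝕏) : (Fin k → 𝕏) → ℝ :=
  fun w => (∑ i ∈ Finset.range (n / k), if blk (i * k) k ω = w then (1 : ℝ) else 0) / (n / k : ℕ)

/-- Plug-in estimator `H(k, x_1^n)` of the block entropy. -/
noncomputable def plugIn (k n : ℕ) (ω : ℤ → 𝕏) : ℝ := Hent (empDist k n ω)

/-- True block distribution `p_k(w) = P(X_1^k = w)`. -/
noncomputable def pblock (μ : Measure (ℤ → 𝕏)) (k : ℕ) : (Fin k → 𝕏) → ℝ :=
  fun w => (μ {ω | blk 0 k ω = w}).toReal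

/-- Block entropy `H(k) = H(p_k)`. -/
noncomputable def Hblock (μ : Measure (ℤ → 𝕏)) (k : ℕ) : ℝ := Hent (pblock μ k)

/-- Number `D(k, x_1^n)` of distinct nonoverlapping `k`-blocks in `x_1^n`. -/
noncomputable def Dcount (k n : ℕ) (ω : ℤ → 𝕏) : ℕ :=
  Set.ncard {w : Fin k → 𝕏 | ∃ i < n / k, blk (i * k) k ω = w}

/-- Length bound `K(k, x_1^n)` of the modified `k`-block code:
`K(k,x_1^n) = 2 log₂ k + (n/k)(H(k,x_1^n) + 2) + 3 k log₂|𝕏| (D(k,x_1^n) + 1)`. -/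
noncomputable def Kcode (k n : ℕ) (ω : ℤ → 𝕏) : ℝ :=
  2 * Real.logb 2 k + ((n : ℝ) / k) * (plugIn k n ω + 2)
    + 3 * k * Real.logb 2 (Fintype.card 𝕏) * (Dcount k n ω + 1)

/-- Conditional probability `P(X_1^k = w | ℐ)` given the shift-invariant
σ-algebra `ℐ`, as a function of the sample point. -/
noncomputable def condP (μ : Measure (ℤ → 𝕏)) (k : ℕ) (w : Fin k → 𝕏) : (ℤ → 𝕏) → ℝ :=
  μ[Set.indicator {ω | blk 0 k ω = w} (fun _ => (1 : ℝ)) | MeasurableSpace.invariants shift]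

/-- Conditional block entropy `H(X_1^k | ℐ) = E[-log₂ P(X_1^k = w | ℐ)|_{w = X_1^k}]`. -/
noncomputable def condH (μ : Measure (ℤ → 𝕏)) (k : ℕ) : ℝ :=
  ∫ ω, -Real.logb 2 (condP μ k (blk 0 k ω) ω) ∂μ

/-- `σ(y) = min(2^y, 1)`. -/
noncomputable def sigmaFn (y : ℝ) : ℝ := min ((2 : ℝ) ^ y) 1

/-- Negative part `x⁻ = -x · 1[x < 0]`. -/
noncomputable def nPart (x : ℝ) : ℝ := if x < 0 then -x else 0

set_option linter.unusedSectionVars false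

lemma hp_gibbs {B : Type*} [Fintype B] (P q : B → ℝ) (hP : ∀ b, 0 ≤ P b) (hs : ∑ b, P b = 1)
    (hq : ∀ b, 0 < q b) (hqs : ∑ b, q b ≤ 3) :
    Hent P ≤ (∑ b, P b * (-Real.logb 2 (q b))) + 3 := by
  have hl : 0 < Real.log 2 := Real.log_pos (by norm_num)
  have key : ∀ b, -(P b * Real.logb 2 (P b)) - P b * (-Real.logb 2 (q b))
      ≤ (q b - P b) / Real.log 2 := by
    intro b
    rcases (hP b).eq_or_lt with h0 | h0
    · rw [← h0]; simp; exact div_nonneg (hq b).le hl.le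
    · have h1 : Real.log (q b / P b) ≤ q b / P b - 1 :=
        Real.log_le_sub_one_of_pos (div_pos (hq b) h0)
      rw [Real.log_div (hq b).ne' h0.ne'] at h1
      have h2 : P b * (Real.log (q b) - Real.log (P b)) ≤ q b - P b := by
        have := mul_le_mul_of_nonneg_left h1 h0.le
        have h3 : P b * (q b / P b - 1) = q b - P b := by field_simp
        linarith
      have h4 : -(P b * Real.logb 2 (P b)) - P b * (-Real.logb 2 (q b))
          = (P b * (Real.log (q b) - Real.log (P b))) / Real.log 2 := by
        simp only [Real.logb]; ring
      rw [h4]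
      exact div_le_div_of_nonneg_right h2 hl.le
  have hsum := Finset.sum_le_sum (fun b (_ : b ∈ Finset.univ) => key b)
  rw [Finset.sum_sub_distrib, ← Finset.sum_div, Finset.sum_sub_distrib, Finset.sum_neg_distrib,
    hs] at hsum
  have h5 : (∑ b, q b - 1) / Real.log 2 ≤ 3 := by
    rw [div_le_iff₀ hl]
    have := Real.log_two_gt_d9
    linarith
  unfold Hent
  linarith

/-- Empirical distribution of a finite word. -/
noncomputable def hpEmp {A : Type*} [DecidableEq A] {N : ℕ} (y : Fin N → A) (a : A) : ℝ :=
  (∑ i, if y i = a then (1 : ℝ) else 0) / N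

lemma hpEmp_nonneg {A : Type*} [DecidableEq A] {N : ℕ} (y : Fin N → A) (a : A) :
    0 ≤ hpEmp y a := by
  unfold hpEmp
  refine div_nonneg (Finset.sum_nonneg fun i _ => ?_) (Nat.cast_nonneg _)
  split_ifs <;> norm_num

lemma hpEmp_sum {A : Type*} [Fintype A] [DecidableEq A] {N : ℕ} (hN : 0 < N) (y : Fin N → A)
    (F : A → ℝ) : ∑ i, F (y i) = N * ∑ a, hpEmp y a * F a := by
  have hN' : (N : ℝ) ≠ 0 := by positivity
  unfold hpEmp
  rw [Finset.mul_sum]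
  have : ∀ a, (N : ℝ) * ((∑ i, if y i = a then (1 : ℝ) else 0) / N * F a)
      = ∑ i, if y i = a then F a else 0 := by
    intro a
    rw [← mul_assoc, mul_div_cancel₀ _ hN', Finset.sum_mul]
    refine Finset.sum_congr rfl fun i _ => ?_
    split_ifs <;> simp
  simp_rw [this]
  rw [Finset.sum_comm]
  simp

lemma hpEmp_total {A : Type*} [Fintype A] [DecidableEq A] {N : ℕ} (hN : 0 < N) (y : Fin N → A) :
    ∑ a, hpEmp y a = 1 := by
  have h := hpEmp_sum hN y (fun _ => 1)
  simp only [mul_one, Finset.sum_const, Finset.card_univ, Fintype.card_fin, nsmul_eq_mul] at h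
  have hN' : (N : ℝ) ≠ 0 := by positivity
  field_simp at h
  linarith

lemma hpEmp_le_one {A : Type*} [Fintype A] [DecidableEq A] {N : ℕ} (hN : 0 < N) (y : Fin N → A)
    (a : A) : hpEmp y a ≤ 1 := by
  rw [← hpEmp_total hN y]
  exact Finset.single_le_sum (fun b _ => hpEmp_nonneg y b) (Finset.mem_univ a)

lemma hpEmp_pos {A : Type*} [Fintype A] [DecidableEq A] {N : ℕ} (hN : 0 < N) (y : Fin N → A)
    (i : Fin N) : 0 < hpEmp y (y i) := by
  unfold hpEmp
  refine div_pos ?_ (by positivity)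
  refine Finset.sum_pos' (fun j _ => ?_) ⟨i, Finset.mem_univ i, by simp⟩
  split_ifs <;> norm_num

lemma hpEmp_zero {A : Type*} [Fintype A] [DecidableEq A] {N : ℕ} (y : Fin N → A)
    (a : A) (ha : a ∉ Finset.univ.image y) : hpEmp y a = 0 := by
  unfold hpEmp
  rw [Finset.sum_eq_zero, zero_div]
  intro i _
  rw [if_neg]
  rintro rfl
  exact ha (Finset.mem_image_of_mem _ (Finset.mem_univ i))

lemma hp_code {A : Type*} [Fintype A] [DecidableEq A] [Nonempty A] {N : ℕ} (hN : 0 < N) :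
    ∃ q : (Fin N → A) → ℝ, (∀ y, 0 < q y) ∧ ∑ y, q y ≤ 3 ∧
      ∀ y, -Real.logb 2 (q y) ≤ N * (Hent (hpEmp y) + 1)
        + 2 * Real.logb 2 (Fintype.card A) * (Finset.univ.image y).card := by
  classical
  set G : ℕ := Fintype.card A with hG
  have hG0 : 0 < G := Fintype.card_pos
  have hG0' : (0 : ℝ) < G := by exact_mod_cast hG0
  -- quantised type
  have hceil : ∀ (y : Fin N → A) a, ⌈hpEmp y a * G⌉₊ < G + 1 := by
    intro y a
    rw [Nat.lt_succ_iff]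
    apply Nat.ceil_le.2
    have := hpEmp_le_one hN y a
    nlinarith
  let f : (Fin N → A) → (A → Fin (G + 1)) := fun y a => ⟨⌈hpEmp y a * G⌉₊, hceil y a⟩
  let S : (A → Fin (G + 1)) → A → ℝ := fun g a => ((g a : ℕ) : ℝ) / (2 * G)
  let W : (A → Fin (G + 1)) → ℝ := fun g => ∏ a, if (g a : ℕ) = 0 then 1 else ((G : ℝ) ^ 2)⁻¹
  have hS0 : ∀ g a, 0 ≤ S g a := fun g a => by positivity
  have hW0 : ∀ g, 0 < W g := fun g => Finset.prod_pos fun a _ => by split_ifs <;> positivity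
  have hSsum : ∀ y, ∑ a, S (f y) a ≤ 1 := by
    intro y
    have h1 : ∀ a, S (f y) a ≤ (hpEmp y a * G + 1) / (2 * G) := by
      intro a
      refine div_le_div_of_nonneg_right ?_ (by positivity)
      exact (Nat.ceil_lt_add_one (mul_nonneg (hpEmp_nonneg y a) hG0'.le)).le
    calc ∑ a, S (f y) a ≤ ∑ a, (hpEmp y a * G + 1) / (2 * G) := Finset.sum_le_sum fun a _ => h1 a
      _ = 1 := by
        rw [← Finset.sum_div, Finset.sum_add_distrib, ← Finset.sum_mul, hpEmp_total hN y]
        simp only [Finset.sum_const, Finset.card_univ, ← hG, nsmul_eq_mul]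
        field_simp
        norm_num
  have hSlow : ∀ y a, hpEmp y a / 2 ≤ S (f y) a := by
    intro y a
    have h1 : hpEmp y a * G ≤ (⌈hpEmp y a * G⌉₊ : ℝ) := Nat.le_ceil _
    show hpEmp y a / 2 ≤ (⌈hpEmp y a * G⌉₊ : ℝ) / (2 * G)
    rw [div_le_div_iff₀ (by norm_num) (by positivity)]
    linarith
  have hSpos : ∀ (y : Fin N → A) i, 0 < S (f y) (y i) := fun y i =>
    lt_of_lt_of_le (half_pos (hpEmp_pos hN y i)) (hSlow y (y i))
  have hWsum : ∑ g, W g ≤ 3 := by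
    have h1 : ∑ g, W g = ∏ _a : A, ∑ j : Fin (G + 1), (if (j : ℕ) = 0 then 1 else ((G : ℝ) ^ 2)⁻¹) := by
      rw [Finset.prod_univ_sum]
      simp [W]
    have h2 : ∑ j : Fin (G + 1), (if (j : ℕ) = 0 then 1 else ((G : ℝ) ^ 2)⁻¹) = 1 + (G : ℝ)⁻¹ := by
      rw [Fin.sum_univ_succ]
      simp
      field_simp
    rw [h1, h2, Finset.prod_const, Finset.card_univ, ← hG]
    have h3 : 1 + (G : ℝ)⁻¹ ≤ Real.exp ((G : ℝ)⁻¹) := by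
      have := Real.add_one_le_exp ((G : ℝ)⁻¹); linarith
    calc (1 + (G : ℝ)⁻¹) ^ G ≤ (Real.exp ((G : ℝ)⁻¹)) ^ G := by gcongr
      _ = Real.exp 1 := by
        rw [← Real.exp_nat_mul, mul_inv_cancel₀ hG0'.ne']
      _ ≤ 3 := by have := Real.exp_one_lt_d9; linarith
  refine ⟨fun y => W (f y) * ∏ i, S (f y) (y i), fun y => mul_pos (hW0 _)
    (Finset.prod_pos fun i _ => hSpos y i), ?_, ?_⟩
  · refine le_trans ?_ hWsum
    have h1 : ∀ y : Fin N → A, W (f y) * ∏ i, S (f y) (y i)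
        ≤ ∑ g, if (∑ a, S g a ≤ 1) then W g * ∏ i, S g (y i) else 0 := by
      intro y
      have := Finset.single_le_sum (s := Finset.univ)
        (f := fun g => if (∑ a, S g a ≤ 1) then W g * ∏ i, S g (y i) else 0) (fun g _ => by
          split_ifs
          · exact mul_nonneg (hW0 g).le (Finset.prod_nonneg fun i _ => hS0 _ _)
          · exact le_rfl) (Finset.mem_univ (f y))
      rwa [if_pos (hSsum y)] at this
    refine (Finset.sum_le_sum fun y _ => h1 y).trans ?_
    rw [Finset.sum_comm]
    refine Finset.sum_le_sum fun g _ => ?_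
    by_cases hg : ∑ a, S g a ≤ 1
    · simp only [if_pos hg]
      rw [← Finset.mul_sum]
      have h2 : ∑ y : Fin N → A, ∏ i, S g (y i) = ∏ _i : Fin N, ∑ a, S g a := by
        rw [Finset.prod_univ_sum]; simp
      rw [h2]
      refine mul_le_of_le_one_right (hW0 g).le ?_
      rw [Finset.prod_const]
      exact pow_le_one₀ (Finset.sum_nonneg fun a _ => hS0 g a) hg
    · simp only [if_neg hg]
      simp [(hW0 g).le]
  · intro y
    rw [Real.logb_mul (hW0 _).ne' (Finset.prod_pos fun i _ => hSpos y i).ne',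
      Real.logb_prod _ _ (fun i _ => (hSpos y i).ne')]
    have hA : -Real.logb 2 (W (f y)) ≤ 2 * Real.logb 2 G * (Finset.univ.image y).card := by
      have e1 : W (f y) ≥ ((G : ℝ) ^ 2)⁻¹ ^ (Finset.univ.image y).card := by
        have : ((G : ℝ) ^ 2)⁻¹ ^ (Finset.univ.image y).card
            = ∏ a, if a ∈ Finset.univ.image y then ((G : ℝ) ^ 2)⁻¹ else 1 := by
          rw [Finset.prod_ite_mem, Finset.univ_inter, Finset.prod_const]
        rw [this]
        refine Finset.prod_le_prod (fun a _ => by split_ifs <;> positivity) fun a _ => ?_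
        by_cases ha : a ∈ Finset.univ.image y
        · rw [if_pos ha]
          split_ifs
          · apply inv_le_one_of_one_le₀
            have : (1 : ℝ) ≤ G := by exact_mod_cast hG0
            nlinarith
          · exact le_rfl
        · rw [if_neg ha, if_pos]
          show ⌈hpEmp y a * G⌉₊ = 0
          rw [hpEmp_zero y a ha]; simp
      have e2 := Real.logb_le_logb_of_le (b := 2) (by norm_num) (by positivity) e1
      rw [Real.logb_pow, Real.logb_inv, Real.logb_pow] at e2
      push_cast at e2
      linarith
    have hB : -∑ i, Real.logb 2 (S (f y) (y i)) ≤ N * (Hent (hpEmp y) + 1) := by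
      have e1 : ∀ i, Real.logb 2 (hpEmp y (y i)) - 1 ≤ Real.logb 2 (S (f y) (y i)) := by
        intro i
        have := Real.logb_le_logb_of_le (b := 2) (by norm_num)
          (half_pos (hpEmp_pos hN y i)) (hSlow y (y i))
        rwa [Real.logb_div (hpEmp_pos hN y i).ne' (by norm_num),
          Real.logb_self_eq_one (by norm_num)] at this
      have e2 := Finset.sum_le_sum fun i (_ : i ∈ Finset.univ) => e1 i
      rw [Finset.sum_sub_distrib, hpEmp_sum hN y (fun a => Real.logb 2 (hpEmp y a))] at e2
      simp only [Finset.sum_const, Finset.card_univ, Fintype.card_fin, nsmul_eq_mul] at e2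
      unfold Hent
      linarith
    linarith

lemma hp_mean_ergodic {Ω : Type*} [MeasurableSpace Ω] {μ : Measure Ω} [IsProbabilityMeasure μ]
    {T : Ω → Ω} (herg : Ergodic T μ) (g : Ω → ℝ) (hg : MemLp g 2 μ) (h0 : ∫ ω, g ω ∂μ = 0) :
    TendstoInMeasure μ (fun (n : ℕ) ω => (n : ℝ)⁻¹ * ∑ i ∈ Finset.range n, g (T^[i] ω)) atTop
      (fun _ => (0 : ℝ)) := by
  have hT := herg.toMeasurePreserving
  let U : Lp ℝ 2 μ →L[ℝ] Lp ℝ 2 μ :=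
    (Lp.compMeasurePreservingₗᵢ ℝ T hT).toContinuousLinearMap
  have hU : ‖U‖ ≤ 1 := LinearIsometry.norm_toContinuousLinearMap_le _
  have hUap : ∀ x, U x = Lp.compMeasurePreserving T hT x := fun x => rfl
  set x : Lp ℝ 2 μ := hg.toLp g with hx
  have hlim := ContinuousLinearMap.tendsto_birkhoffAverage_orthogonalProjection U hU x
  set y := ((U.eqLocus (1 : Lp ℝ 2 μ →L[ℝ] Lp ℝ 2 μ)).orthogonalProjectionOnto x) with hy
  have hUit : ∀ n : ℕ, U^[n] x = (hg.comp_measurePreserving (hT.iterate n)).toLp _ := by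
    intro n
    have : (U : Lp ℝ 2 μ → Lp ℝ 2 μ) = Lp.compMeasurePreserving T hT := rfl
    rw [this, Lp.compMeasurePreserving_iterate, hx, Lp.toLp_compMeasurePreserving]
  have hae : ∀ n : ℕ, (birkhoffAverage ℝ U id n x : Lp ℝ 2 μ) =ᵐ[μ]
      fun ω => (n : ℝ)⁻¹ * ∑ i ∈ Finset.range n, g (T^[i] ω) := by
    intro n
    have e : ∀ n : ℕ, ((∑ i ∈ Finset.range n, U^[i] x : Lp ℝ 2 μ) : Ω → ℝ) =ᵐ[μ]
        fun ω => ∑ i ∈ Finset.range n, g (T^[i] ω) := by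
      intro n
      induction n with
      | zero =>
        simp only [Finset.range_zero, Finset.sum_empty]
        exact Lp.coeFn_zero ℝ 2 μ
      | succ n ih =>
        rw [Finset.sum_range_succ]
        have h1 := MemLp.coeFn_toLp (hg.comp_measurePreserving (hT.iterate n))
        rw [← hUit n] at h1
        filter_upwards [ih, h1, Lp.coeFn_add (∑ i ∈ Finset.range n, U^[i] x) (U^[n] x)]
          with ω a1 a2 a3
        rw [a3, Pi.add_apply, a1, a2, Finset.sum_range_succ]
        rfl
    filter_upwards [e n, Lp.coeFn_smul ((n : ℝ)⁻¹) (∑ i ∈ Finset.range n, U^[i] x)] with ω a1 a2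
    have : (birkhoffAverage ℝ U id n x : Lp ℝ 2 μ) = (n : ℝ)⁻¹ • (∑ i ∈ Finset.range n, U^[i] x) := by
      rfl
    rw [this, a2, Pi.smul_apply, a1, smul_eq_mul]
  have hfix : U (y : Lp ℝ 2 μ) = y := y.2
  have hconst : ∃ c : ℝ, ((y : Lp ℝ 2 μ) : Ω → ℝ) =ᵐ[μ] Function.const Ω c := by
    refine herg.ae_eq_const_of_ae_eq_comp_ae (Lp.aestronglyMeasurable _) ?_
    have h1 := Lp.coeFn_compMeasurePreserving (y : Lp ℝ 2 μ) hT
    rw [← hUap, hfix] at h1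
    exact h1.symm
  obtain ⟨c, hc⟩ := hconst
  have hxy : inner ℝ x (y : Lp ℝ 2 μ) = 0 := by
    rw [L2.inner_def]
    have : ∫ ω, g ω * c ∂μ = 0 := by rw [integral_mul_const, h0, zero_mul]
    rw [← this]
    refine integral_congr_ae ?_
    filter_upwards [hc, MemLp.coeFn_toLp hg] with ω a1 a2
    rw [a1, hx, a2]
    simp [mul_comm]
  have hyy : inner ℝ (y : Lp ℝ 2 μ) (y : Lp ℝ 2 μ) = 0 := by
    rw [← hxy]
    exact Submodule.inner_orthogonalProjectionOnto_eq_of_mem_right y x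
  have hy0 : (y : Lp ℝ 2 μ) = 0 := inner_self_eq_zero.1 hyy
  rw [hy0] at hlim
  have := tendstoInMeasure_of_tendsto_Lp hlim
  exact (this.congr_left hae).congr_right (Lp.coeFn_zero ℝ 2 μ)

lemma hp_blk_measurable (s l : ℕ) : Measurable (blk (𝕏 := 𝕏) s l) :=
  measurable_pi_lambda _ fun _ => measurable_pi_apply _

lemma hp_shift_iter (i : ℕ) (ω : ℤ → 𝕏) (z : ℤ) : (shift^[i] ω) z = ω (z + i) := by
  induction i generalizing ω z with
  | zero => simp
  | succ i ih =>
    rw [Function.iterate_succ_apply', shift, ih]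
    congr 1
    push_cast; ring

lemma hp_blk_shift (s l i : ℕ) (ω : ℤ → 𝕏) : blk s l (shift^[i] ω) = blk (s + i) l ω := by
  funext j
  simp only [blk, hp_shift_iter]
  congr 1
  push_cast; ring

lemma hp_map_blk {μ : Measure (ℤ → 𝕏)} (hT : MeasurePreserving shift μ μ) (s l : ℕ) :
    Measure.map (blk s l) μ = Measure.map (blk 0 l) μ := by
  have h1 : (blk (𝕏 := 𝕏) s l) = blk 0 l ∘ shift^[s] := by
    funext ω
    simp [hp_blk_shift]
  rw [h1, ← Measure.map_map (hp_blk_measurable 0 l) (hT.iterate s).measurable,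
    (hT.iterate s).map_eq]

lemma hp_integrable {μ : Measure (ℤ → 𝕏)} [IsProbabilityMeasure μ] (s l : ℕ)
    (F : (Fin l → 𝕏) → ℝ) : Integrable (fun ω => F (blk s l ω)) μ := by
  have : IsProbabilityMeasure (Measure.map (blk (𝕏 := 𝕏) s l) μ) :=
    Measure.isProbabilityMeasure_map (hp_blk_measurable s l).aemeasurable
  exact (Integrable.of_finite (f := F)).comp_measurable (hp_blk_measurable s l)

lemma hp_integral {μ : Measure (ℤ → 𝕏)} [IsProbabilityMeasure μ]
    (hT : MeasurePreserving shift μ μ) (s l : ℕ) (F : (Fin l → 𝕏) → ℝ) :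
    ∫ ω, F (blk s l ω) ∂μ = ∑ w, pblock μ l w * F w := by
  have : IsProbabilityMeasure (Measure.map (blk (𝕏 := 𝕏) 0 l) μ) :=
    Measure.isProbabilityMeasure_map (hp_blk_measurable 0 l).aemeasurable
  have h1 : ∫ ω, F (blk s l ω) ∂μ = ∫ w, F w ∂(Measure.map (blk s l) μ) :=
    (integral_map (hp_blk_measurable s l).aemeasurable
      (Measurable.of_discrete).aestronglyMeasurable).symm
  rw [h1, hp_map_blk hT, integral_fintype Integrable.of_finite]
  refine Finset.sum_congr rfl fun w _ => ?_
  rw [smul_eq_mul, pblock, Measure.real,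
    Measure.map_apply (hp_blk_measurable 0 l) (measurableSet_singleton w)]
  rfl

lemma hp_measure {μ : Measure (ℤ → 𝕏)} [IsProbabilityMeasure μ]
    (hT : MeasurePreserving shift μ μ) (s l : ℕ) (p : (Fin l → 𝕏) → Prop) [DecidablePred p] :
    μ.real {ω | p (blk s l ω)} = ∑ w, if p w then pblock μ l w else 0 := by
  have h1 := hp_integral hT s l (fun w => if p w then (1 : ℝ) else 0)
  have hm : MeasurableSet {ω : ℤ → 𝕏 | p (blk s l ω)} :=
    (hp_blk_measurable s l) (MeasurableSet.of_discrete (s := {w | p w}))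
  have h2 : ∫ ω, (if p (blk s l ω) then (1 : ℝ) else 0) ∂μ = μ.real {ω | p (blk s l ω)} := by
    rw [← integral_indicator_one hm]
    congr 1; funext ω
    simp [Set.indicator_apply]
  rw [← h2, h1]
  refine Finset.sum_congr rfl fun w _ => ?_
  split_ifs <;> simp

lemma hp_pblock_nonneg (μ : Measure (ℤ → 𝕏)) (l : ℕ) (w : Fin l → 𝕏) : 0 ≤ pblock μ l w :=
  ENNReal.toReal_nonneg

lemma hp_pblock_sum {μ : Measure (ℤ → 𝕏)} [IsProbabilityMeasure μ]
    (hT : MeasurePreserving shift μ μ) (l : ℕ) : ∑ w, pblock μ l w = 1 := by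
  have := hp_integral hT 0 l (fun _ => 1)
  simpa using this.symm

lemma hp_pblock_pos {μ : Measure (ℤ → 𝕏)} [IsProbabilityMeasure μ]
    (hT : MeasurePreserving shift μ μ) (s l : ℕ) : ∀ᵐ ω ∂μ, 0 < pblock μ l (blk s l ω) := by
  classical
  have h1 := hp_measure hT s l (fun w => pblock μ l w = 0)
  rw [Finset.sum_eq_zero, measureReal_eq_zero_iff] at h1
  · have h2 : ∀ᵐ ω ∂μ, ¬ (pblock μ l (blk s l ω) = 0) := by
      rw [ae_iff]; simpa using h1
    filter_upwards [h2] with ω h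
    exact lt_of_le_of_ne (hp_pblock_nonneg _ _ _) (Ne.symm h)
  · intro w _
    split_ifs with h
    · exact h
    · rfl

lemma hp_Hblock {μ : Measure (ℤ → 𝕏)} [IsProbabilityMeasure μ]
    (hT : MeasurePreserving shift μ μ) (s l : ℕ) :
    ∫ ω, -Real.logb 2 (pblock μ l (blk s l ω)) ∂μ = Hblock μ l := by
  rw [hp_integral hT s l (fun w => -Real.logb 2 (pblock μ l w))]
  simp [Hblock, Hent]

lemma hp_snoc_blk (s l : ℕ) (ω : ℤ → 𝕏) (u : Fin l → 𝕏) (x : 𝕏) :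
    blk s (l + 1) ω = Fin.snoc (α := fun _ => 𝕏) u x ↔ blk s l ω = u ∧ ω ((s : ℤ) + 1 + l) = x := by
  have h : blk s (l + 1) ω = Fin.snoc (α := fun _ => 𝕏) (blk s l ω) (ω ((s : ℤ) + 1 + l)) := by
    funext j
    refine Fin.lastCases ?_ (fun i => ?_) j
    · simp [blk]
    · simp [blk]
  rw [h, Fin.snoc_inj]

lemma hp_marginal {μ : Measure (ℤ → 𝕏)} [IsProbabilityMeasure μ]
    (l : ℕ) (u : Fin l → 𝕏) :
    ∑ x, pblock μ (l + 1) (Fin.snoc (α := fun _ => 𝕏) u x) = pblock μ l u := by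
  classical
  have h0 : ∀ (m : ℕ) (w : Fin m → 𝕏), pblock μ m w
      = ∫ ω, (if blk 0 m ω = w then (1 : ℝ) else 0) ∂μ := by
    intro m w
    have hm : MeasurableSet {ω : ℤ → 𝕏 | blk 0 m ω = w} :=
      (hp_blk_measurable 0 m) (measurableSet_singleton w)
    rw [pblock, ← Measure.real, ← integral_indicator_one hm]
    congr 1; funext ω
    simp [Set.indicator_apply]
  simp_rw [h0]
  rw [← integral_finsetSum _ (fun x _ => hp_integrable 0 (l + 1)
    (fun w => if w = Fin.snoc (α := fun _ => 𝕏) u x then (1 : ℝ) else 0))]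
  refine integral_congr_ae (Eventually.of_forall fun ω => ?_)
  simp only [hp_snoc_blk]
  by_cases h : blk 0 l ω = u <;> simp [h]

/-- Extension of a word to a two-sided sequence. -/
noncomputable def hpExt {K : ℕ} (w : Fin K → 𝕏) : ℤ → 𝕏 := fun z =>
  if h : 1 ≤ z ∧ z ≤ K then w ⟨(z - 1).toNat, by omega⟩ else Classical.arbitrary 𝕏

lemma hpExt_blk {K : ℕ} (ω : ℤ → 𝕏) (i l : ℕ) (h : i + l ≤ K) :
    blk i l (hpExt (blk 0 K ω)) = blk i l ω := by
  funext j
  have := j.2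
  simp only [blk, hpExt]
  rw [dif_pos (by constructor <;> omega)]
  congr 1
  push_cast
  rw [Int.toNat_of_nonneg (by omega)]
  ring

lemma hpExt_snoc {K : ℕ} (w : Fin K → 𝕏) (x : 𝕏) (i l : ℕ) (h : i + l ≤ K) :
    blk i l (hpExt (Fin.snoc (α := fun _ => 𝕏) w x)) = blk i l (hpExt w) := by
  funext j
  have := j.2
  simp only [blk, hpExt]
  rw [dif_pos (by constructor <;> omega), dif_pos (by constructor <;> omega)]
  simp only [Fin.snoc]
  rw [dif_pos (by omega)]
  rfl

lemma hpExt_last {K : ℕ} (w : Fin K → 𝕏) (x : 𝕏) :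
    hpExt (Fin.snoc (α := fun _ => 𝕏) w x) ((K : ℤ) + 1) = x := by
  simp only [hpExt]
  rw [dif_pos (by constructor <;> push_cast <;> omega)]
  simp only [Fin.snoc]
  rw [dif_neg (by omega)]
  rfl

/-- Markov kernel of order `m`. -/
noncomputable def hpC (μ : Measure (ℤ → 𝕏)) (m s : ℕ) (ω : ℤ → 𝕏) : ℝ :=
  pblock μ (m + 1) (blk s (m + 1) ω) / pblock μ m (blk s m ω)

lemma hp_markov_sum {μ : Measure (ℤ → 𝕏)} [IsProbabilityMeasure μ] (m j : ℕ) :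
    ∑ w : Fin (m + j) → 𝕏, ∏ i ∈ Finset.range j, hpC μ m i (hpExt w)
      ≤ (Fintype.card (Fin m → 𝕏) : ℝ) := by
  induction j with
  | zero => simp
  | succ j ih =>
    refine le_trans ?_ ih
    change ∑ w : Fin (m + j + 1) → 𝕏, ∏ i ∈ Finset.range (j + 1), hpC μ m i (hpExt w) ≤ _
    rw [← (Fin.snocEquiv (fun _ : Fin (m + j + 1) => 𝕏)).sum_comp, Fintype.sum_prod_type,
      Finset.sum_comm]
    refine Finset.sum_le_sum fun w _ => ?_
    have h1 : ∀ x : 𝕏, ∏ i ∈ Finset.range (j + 1), hpC μ m i (hpExt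
        (Fin.snocEquiv (fun _ : Fin (m + j + 1) => 𝕏) (x, w)))
        = (∏ i ∈ Finset.range j, hpC μ m i (hpExt w)) *
          (pblock μ (m + 1) (Fin.snoc (α := fun _ => 𝕏) (blk j m (hpExt w)) x)
            / pblock μ m (blk j m (hpExt w))) := by
      intro x
      have e : (Fin.snocEquiv (fun _ : Fin (m + j + 1) => 𝕏) (x, w))
        = Fin.snoc (α := fun _ => 𝕏) w x := rfl
      rw [e, Finset.prod_range_succ]
      congr 1
      · refine Finset.prod_congr rfl fun i hi => ?_
        have := Finset.mem_range.1 hi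
        unfold hpC
        rw [hpExt_snoc w x i (m + 1) (by omega), hpExt_snoc w x i m (by omega)]
      · unfold hpC
        rw [hpExt_snoc w x j m (by omega)]
        congr 2
        rw [hp_snoc_blk]
        refine ⟨hpExt_snoc w x j m (by omega), ?_⟩
        refine Eq.trans ?_ (hpExt_last w x)
        congr 1
        push_cast; ring
    simp_rw [h1]
    rw [← Finset.mul_sum, ← Finset.sum_div, hp_marginal]
    refine mul_le_of_le_one_right (Finset.prod_nonneg fun i _ => ?_) (div_self_le_one _)
    exact div_nonneg (hp_pblock_nonneg _ _ _) (hp_pblock_nonneg _ _ _)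

lemma hp_memLp {μ : Measure (ℤ → 𝕏)} [IsProbabilityMeasure μ] (s l : ℕ)
    (F : (Fin l → 𝕏) → ℝ) : MemLp (fun ω => F (blk s l ω)) 2 μ := by
  refine MemLp.of_bound (hp_integrable s l F).aestronglyMeasurable (∑ w, |F w|)
    (Eventually.of_forall fun ω => ?_)
  rw [Real.norm_eq_abs]
  exact Finset.single_le_sum (f := fun w => |F w|) (fun w _ => abs_nonneg _) (Finset.mem_univ _)

lemma hp_pblock_le_one (μ : Measure (ℤ → 𝕏)) [IsProbabilityMeasure μ] (l : ℕ) (w : Fin l → 𝕏) :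
    pblock μ l w ≤ 1 := by
  unfold pblock
  rw [← Measure.real]
  exact measureReal_le_one

lemma hp_Hblock_nonneg (μ : Measure (ℤ → 𝕏)) [IsProbabilityMeasure μ] (l : ℕ) :
    0 ≤ Hblock μ l := by
  unfold Hblock Hent
  rw [← Finset.sum_neg_distrib]
  refine Finset.sum_nonneg fun w _ => ?_
  have h1 : Real.logb 2 (pblock μ l w) ≤ 0 :=
    Real.logb_nonpos (by norm_num) (hp_pblock_nonneg _ _ _) (hp_pblock_le_one _ _ _)
  nlinarith [hp_pblock_nonneg μ l w]

lemma hp_Hblock_zero {μ : Measure (ℤ → 𝕏)} [IsProbabilityMeasure μ]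
    (hT : MeasurePreserving shift μ μ) : Hblock μ 0 = 0 := by
  have h := hp_pblock_sum hT 0
  unfold Hblock Hent
  simp only [Finset.univ_unique, Finset.sum_singleton] at h ⊢
  rw [h]; simp

lemma hp_exists_m {μ : Measure (ℤ → 𝕏)} [IsProbabilityMeasure μ]
    (hT : MeasurePreserving shift μ μ) {h c : ℝ}
    (hrate : Tendsto (fun k : ℕ => Hblock μ k / k) atTop (nhds h)) (hc : h < c) :
    ∃ m, Hblock μ (m + 1) - Hblock μ m < c := by
  by_contra! hcon
  have h1 : ∀ m : ℕ, m * c ≤ Hblock μ m := by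
    intro m
    induction m with
    | zero => simp [hp_Hblock_zero hT]
    | succ m ih => push_cast; linarith [hcon m]
  have h2 : c ≤ h := by
    refine ge_of_tendsto hrate ?_
    filter_upwards [eventually_gt_atTop 0] with k hk
    rw [le_div_iff₀ (by exact_mod_cast hk)]
    linarith [h1 k]
  linarith

lemma hp_rate_nonneg {μ : Measure (ℤ → 𝕏)} [IsProbabilityMeasure μ] {h : ℝ}
    (hrate : Tendsto (fun k : ℕ => Hblock μ k / k) atTop (nhds h)) : 0 ≤ h :=
  ge_of_tendsto' hrate fun k => div_nonneg (hp_Hblock_nonneg μ k) (Nat.cast_nonneg k)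

lemma hp_markov_ineq {μ : Measure (ℤ → 𝕏)} [IsProbabilityMeasure μ]
    (hT : MeasurePreserving shift μ μ) (m j : ℕ) (t : ℝ) (ht : 0 ≤ t) :
    μ.real {ω | pblock μ (m + j) (blk 0 (m + j) ω) < t * ∏ i ∈ Finset.range j, hpC μ m i ω}
      ≤ t * (Fintype.card (Fin m → 𝕏) : ℝ) := by
  classical
  have h0 := hp_measure hT 0 (m + j)
    (fun w => pblock μ (m + j) w < t * ∏ i ∈ Finset.range j, hpC μ m i (hpExt w))
  have h1 : ∀ ω : ℤ → 𝕏, ∏ i ∈ Finset.range j, hpC μ m i (hpExt (blk 0 (m + j) ω))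
      = ∏ i ∈ Finset.range j, hpC μ m i ω := by
    intro ω
    refine Finset.prod_congr rfl fun i hi => ?_
    have := Finset.mem_range.1 hi
    unfold hpC
    rw [hpExt_blk ω i (m + 1) (by omega), hpExt_blk ω i m (by omega)]
  simp only [h1] at h0
  rw [h0]
  calc _ ≤ ∑ w : Fin (m + j) → 𝕏, t * ∏ i ∈ Finset.range j, hpC μ m i (hpExt w) := by
        refine Finset.sum_le_sum fun w _ => ?_
        split_ifs with hw
        · exact hw.le
        · refine mul_nonneg ht (Finset.prod_nonneg fun i _ => ?_)
          exact div_nonneg (hp_pblock_nonneg _ _ _) (hp_pblock_nonneg _ _ _)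
    _ ≤ _ := by
        rw [← Finset.mul_sum]
        exact mul_le_mul_of_nonneg_left (hp_markov_sum m j) ht

lemma hp_smb {μ : Measure (ℤ → 𝕏)} [IsProbabilityMeasure μ]
    (herg : Ergodic shift μ) {h h' : ℝ}
    (hrate : Tendsto (fun k : ℕ => Hblock μ k / k) atTop (nhds h)) (hh : h < h') :
    Tendsto (fun k : ℕ => μ.real {ω | pblock μ k (blk 0 k ω) < (2 : ℝ) ^ (-((k : ℝ) * h'))})
      atTop (nhds 0) := by
  have hT := herg.toMeasurePreserving
  have h0 := hp_rate_nonneg hrate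
  set δ : ℝ := (h' - h) / 3 with hδ
  have hδ0 : 0 < δ := by rw [hδ]; linarith
  obtain ⟨m, hm⟩ := hp_exists_m hT hrate (c := h + δ) (by linarith)
  set e := Hblock μ (m + 1) - Hblock μ m with he
  let g : (ℤ → 𝕏) → ℝ := fun ω => -Real.logb 2 (pblock μ (m + 1) (blk 0 (m + 1) ω))
    - (-Real.logb 2 (pblock μ m (blk 0 m ω)))
  have hg : MemLp (fun ω => g ω - e) 2 μ :=
    ((hp_memLp 0 (m + 1) (fun w => -Real.logb 2 (pblock μ (m + 1) w))).sub
      (hp_memLp 0 m (fun w => -Real.logb 2 (pblock μ m w)))).sub (memLp_const e)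
  have hgint : Integrable g μ :=
    (hp_integrable 0 (m + 1) (fun w => -Real.logb 2 (pblock μ (m + 1) w))).sub
      (hp_integrable 0 m (fun w => -Real.logb 2 (pblock μ m w)))
  have hge : ∫ ω, (g ω - e) ∂μ = 0 := by
    rw [integral_sub hgint (integrable_const e)]
    have : ∫ ω, g ω ∂μ = e := by
      rw [he, ← hp_Hblock hT 0 (m + 1), ← hp_Hblock hT 0 m]
      exact integral_sub (hp_integrable 0 (m + 1) (fun w => -Real.logb 2 (pblock μ (m + 1) w)))
        (hp_integrable 0 m (fun w => -Real.logb 2 (pblock μ m w)))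
    rw [this]; simp
  have hTIM := hp_mean_ergodic herg _ hg hge
  rw [tendstoInMeasure_iff_norm] at hTIM
  have hlim1 := hTIM δ hδ0
  have hlim2 : Tendsto (fun j : ℕ => μ.real {ω | δ ≤ ‖(j : ℝ)⁻¹ * ∑ i ∈ Finset.range j,
      (g (shift^[i] ω) - e) - 0‖}) atTop (nhds 0) := by
    have := (ENNReal.tendsto_toReal ENNReal.zero_ne_top).comp hlim1
    simpa [Measure.real, Function.comp_def] using this
  set r : ℝ := (2 : ℝ) ^ (-δ) with hr
  have hr0 : 0 < r := by positivity
  have hr1 : r < 1 := Real.rpow_lt_one_of_one_lt_of_neg (by norm_num) (by linarith)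
  have hlim3 : Tendsto (fun j : ℕ => r ^ j * (Fintype.card (Fin m → 𝕏) : ℝ)) atTop (nhds 0) := by
    simpa using (tendsto_pow_atTop_nhds_zero_of_lt_one hr0.le hr1).mul_const
      (Fintype.card (Fin m → 𝕏) : ℝ)
  have hlim4 := hlim3.add hlim2
  rw [add_zero] at hlim4
  rw [← tendsto_add_atTop_iff_nat m]
  refine squeeze_zero' (Eventually.of_forall fun k => measureReal_nonneg) ?_
    hlim4
  filter_upwards [eventually_gt_atTop 0] with j hj
  rw [Nat.add_comm j m]
  refine le_trans ?_ (add_le_add (hp_markov_ineq hT m j (r ^ j) (by positivity)) le_rfl)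
  refine le_trans ?_ (measureReal_union_le _ _)
  refine ENNReal.toReal_mono (measure_ne_top _ _) (measure_mono_ae ?_)
  have hp1 := hp_pblock_pos hT 0 (m + j)
  have hp2 : ∀ᵐ ω ∂μ, ∀ i : ℕ, 0 < pblock μ (m + 1) (blk i (m + 1) ω) :=
    ae_all_iff.2 fun i => hp_pblock_pos hT i (m + 1)
  have hp3 : ∀ᵐ ω ∂μ, ∀ i : ℕ, 0 < pblock μ m (blk i m ω) :=
    ae_all_iff.2 fun i => hp_pblock_pos hT i m
  filter_upwards [hp1, hp2, hp3] with ω a1 a2 a3 hω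
  by_contra hnot
  have hnot' := not_or.1 hnot
  obtain ⟨n1, n2⟩ := hnot'
  have hω' : pblock μ (m + j) (blk 0 (m + j) ω) < (2 : ℝ) ^ (-(((m + j : ℕ) : ℝ) * h')) := hω
  have n1' : ¬ (pblock μ (m + j) (blk 0 (m + j) ω)
      < r ^ j * ∏ i ∈ Finset.range j, hpC μ m i ω) := n1
  have n2' : ¬ (δ ≤ ‖(j : ℝ)⁻¹ * ∑ i ∈ Finset.range j, (g (shift^[i] ω) - e) - 0‖) := n2
  apply n1'
  push Not at n2'
  have hjpos : (0 : ℝ) < j := by exact_mod_cast hj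
  have hc0 : ∀ i, 0 < hpC μ m i ω := fun i => div_pos (a2 i) (a3 i)
  have hgc : ∀ i, g (shift^[i] ω) = -Real.logb 2 (hpC μ m i ω) := by
    intro i
    simp only [g, hpC, hp_blk_shift, zero_add]
    rw [Real.logb_div (a2 i).ne' (a3 i).ne']
    ring
  have hP : 0 < ∏ i ∈ Finset.range j, hpC μ m i ω := Finset.prod_pos fun i _ => hc0 i
  rw [← Real.logb_lt_logb_iff (b := 2) (by norm_num) a1 (by positivity)]
  rw [Real.logb_mul (by positivity) hP.ne', Real.logb_pow, hr,
    Real.logb_rpow (by norm_num) (by norm_num), Real.logb_prod _ _ (fun i _ => (hc0 i).ne')]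
  have b1 : Real.logb 2 (pblock μ (m + j) (blk 0 (m + j) ω)) < -(((m + j : ℕ) : ℝ) * h') := by
    have := (Real.logb_lt_logb_iff (b := 2) (by norm_num) a1 (by positivity)).2 hω'
    rwa [Real.logb_rpow (by norm_num) (by norm_num)] at this
  simp only [hgc] at n2'
  rw [sub_zero, Real.norm_eq_abs] at n2'
  have b2 := (abs_lt.1 n2').2
  rw [inv_mul_lt_iff₀ hjpos, Finset.sum_sub_distrib, Finset.sum_neg_distrib] at b2
  simp only [Finset.sum_const, Finset.card_range, nsmul_eq_mul] at b2
  push_cast at b1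
  have hm0 : (0 : ℝ) ≤ m := Nat.cast_nonneg m
  have b3 : (j : ℝ) * e ≤ j * (h + δ) := mul_le_mul_of_nonneg_left hm.le hjpos.le
  have b4 : h' = h + 3 * δ := by rw [hδ]; ring
  have b5 : 0 ≤ (m : ℝ) * h' := mul_nonneg hm0 (by linarith)
  have b6 : (j : ℝ) * h' = j * h + 3 * (j * δ) := by rw [b4]; ring
  have b7 : (j : ℝ) * (h + δ) = j * h + j * δ := by ring
  have b8 : 0 < (j : ℝ) * δ := mul_pos hjpos hδ0
  linarith

/-- Cutting a word of length `N * k` into `N` blocks of length `k`. -/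
def hpCut (N k : ℕ) : (Fin (N * k) → 𝕏) ≃ (Fin N → Fin k → 𝕏) :=
  ((Equiv.arrowCongr finProdFinEquiv.symm (Equiv.refl 𝕏))).trans (Equiv.curry (Fin N) (Fin k) 𝕏)

lemma hpCut_blk (N k : ℕ) (ω : ℤ → 𝕏) (i : Fin N) :
    hpCut N k (blk 0 (N * k) ω) i = blk (i * k) k ω := by
  funext j
  simp only [hpCut, blk, Equiv.trans_apply, Equiv.curry_apply, Function.curry,
    Equiv.arrowCongr_apply, Function.comp, Equiv.symm_symm, Equiv.refl_apply]
  congr 1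
  simp [finProdFinEquiv]
  ring

lemma hp_empDist (k n : ℕ) (ω : ℤ → 𝕏) :
    empDist k n ω = hpEmp (hpCut (n / k) k (blk 0 (n / k * k) ω)) := by
  funext w
  unfold empDist hpEmp
  simp_rw [hpCut_blk]
  rw [Finset.sum_range (fun i => if blk (i * k) k ω = w then (1 : ℝ) else 0)]

lemma hp_plugIn (k n : ℕ) (ω : ℤ → 𝕏) :
    plugIn k n ω = (fun v => Hent (hpEmp (hpCut (n / k) k v))) (blk 0 (n / k * k) ω) := by
  simp only [plugIn, hp_empDist]

lemma hp_upper {μ : Measure (ℤ → 𝕏)} [IsProbabilityMeasure μ]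
    (hT : MeasurePreserving shift μ μ) (k n : ℕ) (hN : 0 < n / k) :
    ∫ ω, plugIn k n ω ∂μ ≤ Hblock μ k := by
  have hNr : ((n / k : ℕ) : ℝ) ≠ 0 := by positivity
  have hl : 0 < Real.log 2 := Real.log_pos (by norm_num)
  have hHent : ∀ p : (Fin k → 𝕏) → ℝ, Hent p = (∑ w, Real.negMulLog (p w)) / Real.log 2 := by
    intro p
    unfold Hent
    rw [← Finset.sum_neg_distrib, Finset.sum_div]
    refine Finset.sum_congr rfl fun w _ => ?_
    simp only [Real.negMulLog, Real.logb]; ring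
  have hE : ∀ w, ∫ ω, empDist k n ω w ∂μ = pblock μ k w := by
    intro w
    unfold empDist
    rw [integral_div, integral_finsetSum _ (fun i _ => hp_integrable (i * k) k
      (fun v => if v = w then (1 : ℝ) else 0))]
    have : ∀ i ∈ Finset.range (n / k), ∫ ω, (if blk (i * k) k ω = w then (1 : ℝ) else 0) ∂μ
        = pblock μ k w := by
      intro i _
      rw [hp_integral hT (i * k) k (fun v => if v = w then (1 : ℝ) else 0)]
      simp
    rw [Finset.sum_congr rfl this]
    simp only [Finset.sum_const, Finset.card_range, nsmul_eq_mul]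
    field_simp
  have hI : ∀ (w) (φ : ℝ → ℝ), Integrable (fun ω => φ (empDist k n ω w)) μ := by
    intro w φ
    have := hp_integrable (μ := μ) 0 (n / k * k) (fun v => φ (hpEmp (hpCut (n / k) k v) w))
    refine this.congr (Eventually.of_forall fun ω => ?_)
    simp only [hp_empDist]
  have h1 : ∫ ω, plugIn k n ω ∂μ
      = (∑ w, ∫ ω, Real.negMulLog (empDist k n ω w) ∂μ) / Real.log 2 := by
    simp only [plugIn, hHent]
    rw [integral_div, integral_finsetSum _ (fun w _ => hI w Real.negMulLog)]
  rw [h1, Hblock, hHent]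
  refine div_le_div_of_nonneg_right (Finset.sum_le_sum fun w _ => ?_) hl.le
  rw [← hE w]
  refine Real.concaveOn_negMulLog.le_map_integral Real.continuous_negMulLog.continuousOn
    isClosed_Ici (Eventually.of_forall fun ω => ?_) (hI w id) (hI w Real.negMulLog)
  rw [hp_empDist]
  exact hpEmp_nonneg _ _

lemma hp_distinct {μ : Measure (ℤ → 𝕏)} [IsProbabilityMeasure μ]
    (hT : MeasurePreserving shift μ μ) (k N : ℕ) (τ : ℝ) (hτ : 0 < τ) :
    ∫ ω, ((Finset.univ.image (hpCut N k (blk 0 (N * k) ω))).card : ℝ) ∂μ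
      ≤ τ⁻¹ + N * μ.real {ω | pblock μ k (blk 0 k ω) < τ} := by
  classical
  have hcard : ((Finset.univ.filter fun w : Fin k → 𝕏 => τ ≤ pblock μ k w).card : ℝ) ≤ τ⁻¹ := by
    rw [← one_div, le_div_iff₀ hτ]
    calc _ = ∑ w ∈ Finset.univ.filter (fun w : Fin k → 𝕏 => τ ≤ pblock μ k w), τ := by simp
      _ ≤ ∑ w ∈ Finset.univ.filter (fun w : Fin k → 𝕏 => τ ≤ pblock μ k w), pblock μ k w :=
        Finset.sum_le_sum fun w hw => (Finset.mem_filter.1 hw).2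
      _ ≤ ∑ w, pblock μ k w := Finset.sum_le_sum_of_subset_of_nonneg (Finset.filter_subset _ _)
        fun w _ _ => hp_pblock_nonneg _ _ _
      _ = 1 := hp_pblock_sum hT k
  have hpt : ∀ ω : ℤ → 𝕏, ((Finset.univ.image (hpCut N k (blk 0 (N * k) ω))).card : ℝ)
      ≤ τ⁻¹ + ∑ i : Fin N, if pblock μ k (blk (i * k) k ω) < τ then (1 : ℝ) else 0 := by
    intro ω
    set y := hpCut N k (blk 0 (N * k) ω) with hy
    have hyi : ∀ i, y i = blk (i * k) k ω := fun i => hpCut_blk N k ω i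
    have hsub : Finset.univ.image y ⊆ (Finset.univ.filter fun w : Fin k → 𝕏 => τ ≤ pblock μ k w)
        ∪ (Finset.univ.filter fun i : Fin N => pblock μ k (blk (i * k) k ω) < τ).image y := by
      intro w hw
      obtain ⟨i, -, rfl⟩ := Finset.mem_image.1 hw
      rcases le_or_gt τ (pblock μ k (y i)) with h | h
      · exact Finset.mem_union_left _ (by simp [h])
      · refine Finset.mem_union_right _ (Finset.mem_image_of_mem _ ?_)
        rw [hyi] at h
        simp [h]
    have h1 := (Finset.card_le_card hsub).trans (Finset.card_union_le _ _)
    have h2 := h1.trans (Nat.add_le_add_left (Finset.card_image_le) _)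
    have h3 : ((Finset.univ.image y).card : ℝ)
        ≤ ((Finset.univ.filter fun w : Fin k → 𝕏 => τ ≤ pblock μ k w).card : ℝ)
        + ((Finset.univ.filter fun i : Fin N => pblock μ k (blk (i * k) k ω) < τ).card : ℝ) := by
      exact_mod_cast h2
    have h4 : (∑ i : Fin N, if pblock μ k (blk (i * k) k ω) < τ then (1 : ℝ) else 0)
        = ((Finset.univ.filter fun i : Fin N => pblock μ k (blk (i * k) k ω) < τ).card : ℝ) := by
      simp
    rw [h4]
    linarith
  have hIi : ∀ i ∈ (Finset.univ : Finset (Fin N)), Integrable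
      (fun ω => if pblock μ k (blk (i * k) k ω) < τ then (1 : ℝ) else 0) μ := fun i _ =>
    hp_integrable (i * k) k (fun v => if pblock μ k v < τ then (1 : ℝ) else 0)
  have hmono := integral_mono
    (hp_integrable (μ := μ) 0 (N * k) (fun v => ((Finset.univ.image (hpCut N k v)).card : ℝ)))
    ((integrable_const τ⁻¹).add (integrable_finsetSum _ hIi)) (fun ω => by
      simpa using hpt ω)
  refine hmono.trans (le_of_eq ?_)
  have e1 : ∀ i ∈ (Finset.univ : Finset (Fin N)),
      ∫ ω, (if pblock μ k (blk (i * k) k ω) < τ then (1 : ℝ) else 0) ∂μ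
      = μ.real {ω | pblock μ k (blk 0 k ω) < τ} := by
    intro i _
    rw [hp_integral hT (i * k) k (fun v => if pblock μ k v < τ then (1 : ℝ) else 0),
      hp_measure hT 0 k (fun v => pblock μ k v < τ)]
    refine Finset.sum_congr rfl fun w _ => ?_
    split_ifs <;> simp
  calc _ = ∫ ω, (τ⁻¹ + ∑ i : Fin N, if pblock μ k (blk (i * k) k ω) < τ then (1 : ℝ) else 0) ∂μ := by
        simp
    _ = _ := by
      rw [integral_add (integrable_const _) (integrable_finsetSum _ hIi), integral_finsetSum _ hIi,
        Finset.sum_congr rfl e1]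
      simp

lemma hp_lower {μ : Measure (ℤ → 𝕏)} [IsProbabilityMeasure μ]
    (hT : MeasurePreserving shift μ μ) (k n : ℕ) (hN : 0 < n / k) (τ : ℝ) (hτ : 0 < τ) :
    Hblock μ (n / k * k) ≤ (n / k : ℕ) * (∫ ω, plugIn k n ω ∂μ + 1)
      + 2 * (k * Real.logb 2 (Fintype.card 𝕏)) *
        (τ⁻¹ + (n / k : ℕ) * μ.real {ω | pblock μ k (blk 0 k ω) < τ}) + 3 := by
  classical
  set N := n / k with hNd
  obtain ⟨q, hq0, hq1, hq2⟩ := hp_code (A := Fin k → 𝕏) hN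
  have hG := hp_gibbs (pblock μ (N * k)) (fun v => q (hpCut N k v)) (hp_pblock_nonneg μ _)
    (hp_pblock_sum hT _) (fun v => hq0 _) (by rw [(hpCut N k).sum_comp q]; exact hq1)
  have hcard : Real.logb 2 (Fintype.card (Fin k → 𝕏)) = k * Real.logb 2 (Fintype.card 𝕏) := by
    rw [Fintype.card_fun, Fintype.card_fin, Nat.cast_pow, Real.logb_pow]
  have hlog : 0 ≤ Real.logb 2 (Fintype.card 𝕏) :=
    Real.logb_nonneg (by norm_num) (by exact_mod_cast (Fintype.card_pos (α := 𝕏)))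
  rw [hcard] at hq2
  have h1 : ∑ v, pblock μ (N * k) v * (-Real.logb 2 (q (hpCut N k v)))
      ≤ ∑ v, pblock μ (N * k) v * (N * (Hent (hpEmp (hpCut N k v)) + 1)
        + 2 * (k * Real.logb 2 (Fintype.card 𝕏)) * (Finset.univ.image (hpCut N k v)).card) :=
    Finset.sum_le_sum fun v _ => mul_le_mul_of_nonneg_left (hq2 _) (hp_pblock_nonneg _ _ _)
  have h2 : ∑ v, pblock μ (N * k) v * (N * (Hent (hpEmp (hpCut N k v)) + 1)
        + 2 * (k * Real.logb 2 (Fintype.card 𝕏)) * (Finset.univ.image (hpCut N k v)).card)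
      = N * (∑ v, pblock μ (N * k) v * Hent (hpEmp (hpCut N k v)) + ∑ v, pblock μ (N * k) v)
        + 2 * (k * Real.logb 2 (Fintype.card 𝕏)) *
        ∑ v, pblock μ (N * k) v * ((Finset.univ.image (hpCut N k v)).card : ℝ) := by
    rw [← Finset.sum_add_distrib, Finset.mul_sum, Finset.mul_sum, ← Finset.sum_add_distrib]
    refine Finset.sum_congr rfl fun v _ => ?_
    ring
  rw [hp_pblock_sum hT, ← hp_integral hT 0 (N * k) (fun v => Hent (hpEmp (hpCut N k v))),
    ← hp_integral hT 0 (N * k) (fun v => ((Finset.univ.image (hpCut N k v)).card : ℝ))] at h2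
  have h3 : ∫ ω, Hent (hpEmp (hpCut N k (blk 0 (N * k) ω))) ∂μ = ∫ ω, plugIn k n ω ∂μ := by
    simp only [hp_plugIn]
    rfl
  rw [h3] at h2
  have h4 := mul_le_mul_of_nonneg_left (hp_distinct hT k N τ hτ)
    (show 0 ≤ 2 * (k * Real.logb 2 (Fintype.card 𝕏)) by positivity)
  have h5 : Hblock μ (N * k) = Hent (pblock μ (N * k)) := rfl
  linarith

/-- Theorem 1, expectation form: for a stationary ergodic process with entropy
rate `h`, any `ε > 0` and sample sizes `n(k) ≥ 2^{k(h+ε)}`, we have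
`lim_{k→∞} E[H(k, X_1^{n(k)})]/k = h`. -/
theorem expected_plugIn_rate_tendsto
    {μ : Measure (ℤ → 𝕏)} [IsProbabilityMeasure μ]
    (herg : Ergodic shift μ) (h : ℝ)
    (hrate : Tendsto (fun k => Hblock μ k / k) atTop (nhds h))
    (ε : ℝ) (hε : 0 < ε) (n : ℕ → ℕ)
    (hn : ∀ k : ℕ, (2 : ℝ) ^ ((k : ℝ) * (h + ε)) ≤ (n k : ℝ)) :
    Tendsto (fun k => (∫ ω, plugIn k (n k) ω ∂μ) / k) atTop (nhds h) := by
  have hT := herg.toMeasurePreserving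
  have h0 := hp_rate_nonneg hrate
  set L : ℝ := Real.logb 2 (Fintype.card 𝕏) with hL
  have hL0 : 0 ≤ L :=
    Real.logb_nonneg (by norm_num) (by exact_mod_cast (Fintype.card_pos (α := 𝕏)))
  set r : ℝ := (2 : ℝ) ^ (-(ε / 2)) with hr
  have hr0 : 0 < r := by positivity
  have hr1 : r < 1 := Real.rpow_lt_one_of_one_lt_of_neg (by norm_num) (by linarith)
  have hkr : Tendsto (fun k : ℕ => (k : ℝ) * r ^ k) atTop (nhds 0) :=
    tendsto_self_mul_const_pow_of_lt_one hr0.le hr1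
  have hrk : ∀ k : ℕ, r ^ k = (2 : ℝ) ^ (-((k : ℝ) * (ε / 2))) := by
    intro k
    rw [hr, ← Real.rpow_natCast, ← Real.rpow_mul (by norm_num)]
    congr 1; ring
  have hnk : ∀ᶠ k : ℕ in atTop, 0 < k ∧ k ≤ n k := by
    filter_upwards [eventually_gt_atTop 0, hkr.eventually (gt_mem_nhds zero_lt_one)] with k hk h1
    refine ⟨hk, ?_⟩
    have h2 : (k : ℝ) < (2 : ℝ) ^ ((k : ℝ) * (ε / 2)) := by
      rw [hrk, Real.rpow_neg (by norm_num)] at h1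
      have h3 : (0 : ℝ) < (2 : ℝ) ^ ((k : ℝ) * (ε / 2)) := by positivity
      rwa [← div_eq_mul_inv, div_lt_one h3] at h1
    have h4 : (2 : ℝ) ^ ((k : ℝ) * (ε / 2)) ≤ (2 : ℝ) ^ ((k : ℝ) * (h + ε)) := by
      apply Real.rpow_le_rpow_of_exponent_le (by norm_num)
      apply mul_le_mul_of_nonneg_left (by linarith) (Nat.cast_nonneg k)
    have h5 := h2.le.trans (h4.trans (hn k))
    exact_mod_cast h5
  have hNpos : ∀ᶠ k : ℕ in atTop, 0 < n k / k := by
    filter_upwards [hnk] with k hk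
    exact Nat.div_pos hk.2 hk.1
  have hNk : Tendsto (fun k => n k / k * k) atTop atTop := by
    refine tendsto_atTop_mono' _ ?_ tendsto_id
    filter_upwards [hNpos] with k hk
    exact Nat.le_mul_of_pos_left k hk
  have hlimH := hrate.comp hNk
  have hbad := hp_smb herg hrate (h' := h + ε / 2) (by linarith)
  set B : ℕ → ℝ := fun k => μ.real {ω | pblock μ k (blk 0 k ω)
    < (2 : ℝ) ^ (-((k : ℝ) * (h + ε / 2)))} with hB
  have hinv : Tendsto (fun k : ℕ => ((k : ℝ))⁻¹) atTop (nhds 0) :=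
    tendsto_inv_atTop_zero.comp tendsto_natCast_atTop_atTop
  have hlow : Tendsto (fun k : ℕ => Hblock μ (n k / k * k) / ((n k / k * k : ℕ) : ℝ)
      - (k : ℝ)⁻¹ - 2 * L * (2 * ((k : ℝ) * r ^ k) + B k) - 3 * (k : ℝ)⁻¹) atTop (nhds h) := by
    have := ((hlimH.sub hinv).sub (((hkr.const_mul 2).add hbad).const_mul (2 * L))).sub
      (hinv.const_mul 3)
    simpa using this
  refine tendsto_of_tendsto_of_tendsto_of_le_of_le' hlow hrate ?_ ?_
  · filter_upwards [hnk, hNpos] with k hk hN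
    have hkpos : (0 : ℝ) < k := by exact_mod_cast hk.1
    set N := n k / k with hNd
    have hNr : (1 : ℝ) ≤ N := by exact_mod_cast hN
    have hNr0 : (0 : ℝ) < N := by linarith
    have hτ : (0 : ℝ) < (2 : ℝ) ^ (-((k : ℝ) * (h + ε / 2))) := by positivity
    have hmain := hp_lower hT k (n k) hN _ hτ
    rw [← hNd, ← hL] at hmain
    change Hblock μ (N * k) ≤ N * (∫ ω, plugIn k (n k) ω ∂μ + 1)
      + 2 * (k * L) * (((2 : ℝ) ^ (-((k : ℝ) * (h + ε / 2))))⁻¹ + N * B k) + 3 at hmain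
    have hτN : ((2 : ℝ) ^ (-((k : ℝ) * (h + ε / 2))))⁻¹ ≤ N * (2 * (k * r ^ k)) := by
      have e1 : (n k : ℝ) ≤ 2 * k * N := by
        have a1 : n k < k * (N + 1) := by
          rw [hNd]; exact Nat.lt_mul_div_succ (n k) hk.1
        have a2 : (n k : ℝ) < k * (N + 1) := by exact_mod_cast a1
        nlinarith
      have e2 := (hn k).trans e1
      have e3 : ((2 : ℝ) ^ (-((k : ℝ) * (h + ε / 2))))⁻¹
          = (2 : ℝ) ^ ((k : ℝ) * (h + ε)) * r ^ k := by
        rw [hrk, ← Real.rpow_add (by norm_num), ← Real.rpow_neg (by norm_num)]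
        congr 1; ring
      rw [e3]
      calc _ ≤ (2 * k * N) * r ^ k := mul_le_mul_of_nonneg_right e2 (by positivity)
        _ = _ := by ring
    set I := ∫ ω, plugIn k (n k) ω ∂μ with hI
    have hm2 : Hblock μ (N * k) ≤ N * (I + 1)
        + 2 * (k * L) * (N * (2 * (k * r ^ k)) + N * B k) + 3 * N := by
      have : 2 * (k * L) * (((2 : ℝ) ^ (-((k : ℝ) * (h + ε / 2))))⁻¹ + N * B k)
        ≤ 2 * (k * L) * (N * (2 * (k * r ^ k)) + N * B k) :=
        mul_le_mul_of_nonneg_left (by linarith) (by positivity)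
      linarith
    have hm3 : Hblock μ (N * k) / ((N * k : ℕ) : ℝ)
        ≤ (N * (I + 1) + 2 * (k * L) * (N * (2 * (k * r ^ k)) + N * B k) + 3 * N) / (N * k) := by
      push_cast
      exact div_le_div_of_nonneg_right hm2 (by positivity)
    have hm4 : (N * (I + 1) + 2 * (k * L) * (N * (2 * (k * r ^ k)) + N * B k) + 3 * N) / (N * k)
        = I / k + (k : ℝ)⁻¹ + 2 * L * (2 * ((k : ℝ) * r ^ k) + B k) + 3 * (k : ℝ)⁻¹ := by
      field_simp
    linarith
  · filter_upwards [hNpos] with k hN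
    exact div_le_div_of_nonneg_right (hp_upper hT k (n k) hN) (Nat.cast_nonneg k)
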